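/- Let K be a field of characteristic 0, let g ∈ K[x] be irreducible of even degree D = 2^{n−1} (n ≥ 2) with splitting field L, leading coefficient ℓ_g, and roots α_1,…,α_D ∈ L, and assume Gal(L/K) is a 2-group acting transitively on the roots. Let θ(x) = a(x−c)² + b with a ≠ 0. Then the extension L(√(a(α_1 − b)), …, √(a(α_D − b)))/L has degree 2^D if and only if ℓ_g·g(b) is not a square in L. -/

import Mathlib

open Polynomial

/-!
A square root in `F(x)` of an element of `F`, where `x² ∈ F` and `2 ≠ 0`, is `u` or `v x` with
`u, v ∈ F`. Adjoining `√d_i` one at a time, it follows that `√e ∈ F(√d_i : i ∈ S)` only if `e` is a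
square times some `∏_{i ∈ T} d_i`, `T ⊆ S`, so the degree of `F(√d_i : i ∈ S)` falls short of
`2^|S|` precisely when `∏_{i ∈ T} d_i` is a square for some nonempty `T ⊆ S`.

The set `V` of all `T` with `∏_{i ∈ T} d_i` a square is a subgroup of `𝔽₂^D` under symmetric
difference, so if it is not `{∅}` it has even order. A 2-group acting on `V` fixes `∅`, hence also
some nonempty `T ∈ V`, and transitivity forces `T` to consist of all indices. Up to squares the
product of all `a(α_i - b)` is `ℓ_g g(b)`, because the number `D` of factors is even.
-/

theorem isSquare_sq_mul_iff {M : Type*} [CommGroupWithZero M] {c x : M} (hc : c ≠ 0) :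
    IsSquare (c ^ 2 * x) ↔ IsSquare x := by
  refine ⟨fun h ↦ ?_, (IsSquare.sq c).mul⟩
  simpa [hc] using h.div (.sq c)

section Quadratic

open IntermediateField

variable {F E : Type*} [Field F] [Field E] [Algebra F E] {x y : E} {d e : F}

theorem mem_bot_iff_isSquare_of_sq_eq (hx : x ^ 2 = algebraMap F E d) :
    x ∈ (⊥ : IntermediateField F E) ↔ IsSquare d := by
  rw [mem_bot]
  constructor
  · rintro ⟨z, rfl⟩
    rw [← map_pow, (algebraMap F E).injective.eq_iff] at hx
    exact hx ▸ .sq z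
  · rintro ⟨s, rfl⟩
    rw [← sq, map_pow, sq_eq_sq_iff_eq_or_eq_neg] at hx
    rcases hx with rfl | rfl
    exacts [⟨s, rfl⟩, ⟨-s, map_neg _ _⟩]

theorem exists_eq_add_mul_of_mem_adjoin_simple (hx : x ^ 2 = algebraMap F E d) (hy : y ∈ F⟮x⟯) :
    ∃ u v : F, y = algebraMap F E u + algebraMap F E v * x := by
  have hmonic : (X ^ 2 - C d).Monic := monic_X_pow_sub_C d two_ne_zero
  have hroot : aeval x (X ^ 2 - C d) = 0 := by simp [hx]
  have hx_alg : IsAlgebraic F x := ⟨_, hmonic.ne_zero, hroot⟩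
  obtain ⟨p, rfl⟩ : ∃ p : F[X], aeval x p = y := by
    rwa [← mem_toSubalgebra, adjoin_simple_toSubalgebra_of_isAlgebraic hx_alg,
      Algebra.adjoin_singleton_eq_range_aeval] at hy
  have hdeg : (p %ₘ (X ^ 2 - C d)).natDegree ≤ 1 := by
    have hne_one : X ^ 2 - C d ≠ 1 := fun h ↦ by
      simpa only [natDegree_X_pow_sub_C, natDegree_one, two_ne_zero] using congrArg natDegree h
    simpa only [natDegree_X_pow_sub_C, Nat.lt_succ_iff] using
      natDegree_modByMonic_lt p hmonic hne_one
  obtain ⟨v, u, hvu⟩ := exists_eq_X_add_C_of_natDegree_le_one hdeg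
  refine ⟨u, v, ?_⟩
  rw [← aeval_modByMonic_eq_self_of_root hroot, hvu]
  simp [add_comm]

theorem mem_bot_or_mul_mem_bot_of_mem_adjoin_simple (h2 : (2 : F) ≠ 0)
    (hx : x ^ 2 = algebraMap F E d) (hy : y ∈ F⟮x⟯) (hy2 : y ^ 2 = algebraMap F E e) :
    y ∈ (⊥ : IntermediateField F E) ∨ x * y ∈ (⊥ : IntermediateField F E) := by
  obtain ⟨u, v, rfl⟩ := exists_eq_add_mul_of_mem_adjoin_simple hx hy
  simp only [mem_bot]
  rcases eq_or_ne u 0 with rfl | hu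
  · exact .inr ⟨v * d, by rw [map_mul, ← hx, map_zero]; ring⟩
  rcases eq_or_ne v 0 with rfl | hv
  · exact .inl ⟨u, by simp⟩
  have hcross : algebraMap F E (2 * u * v) * x = algebraMap F E (e - u ^ 2 - v ^ 2 * d) := by
    simp only [map_sub, map_mul, map_pow, map_ofNat, ← hx, ← hy2]
    ring
  have hx_mem : x = algebraMap F E ((e - u ^ 2 - v ^ 2 * d) / (2 * u * v)) := by
    rw [map_div₀, eq_div_iff, mul_comm, hcross]
    exact (_root_.map_ne_zero _).2 (mul_ne_zero (mul_ne_zero h2 hu) hv)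
  exact .inl ⟨u + v * ((e - u ^ 2 - v ^ 2 * d) / (2 * u * v)), by
    rw [map_add, map_mul, ← hx_mem]⟩

theorem finrank_adjoin_simple_le_two (hx : x ^ 2 = algebraMap F E d) :
    Module.finrank F F⟮x⟯ ≤ 2 := by
  have hmonic : (X ^ 2 - C d).Monic := monic_X_pow_sub_C d two_ne_zero
  have hroot : aeval x (X ^ 2 - C d) = 0 := by simp [hx]
  rw [adjoin.finrank ⟨_, hmonic, hroot⟩]
  simpa using natDegree_le_of_dvd (minpoly.dvd F x hroot) hmonic.ne_zero

theorem finrank_adjoin_simple_eq_two_iff (hx : x ^ 2 = algebraMap F E d) :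
    Module.finrank F F⟮x⟯ = 2 ↔ x ∉ (⊥ : IntermediateField F E) := by
  have hint : IsIntegral F x := .of_pow two_pos (hx ▸ isIntegral_algebraMap)
  have := adjoin.finiteDimensional hint
  have hpos : 0 < Module.finrank F F⟮x⟯ := Module.finrank_pos
  have hle := finrank_adjoin_simple_le_two hx
  rw [← finrank_adjoin_simple_eq_one_iff]
  omega

end Quadratic

section Multiquadratic

open IntermediateField

variable {F E : Type*} [Field F] [Field E] [Algebra F E]

theorem mem_bot_intermediateField_iff {M : IntermediateField F E} {x : E} :
    x ∈ (⊥ : IntermediateField M E) ↔ x ∈ M := by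
  rw [← mem_restrictScalars F, restrictScalars_bot_eq_self]

theorem restrictScalars_adjoin_simple_adjoin (s : Set E) (x : E) :
    restrictScalars F (adjoin F s)⟮x⟯ = adjoin F (insert x s) := by
  rw [adjoin_adjoin_left, Set.union_singleton]

theorem finrank_adjoin_insert (s : Set E) (x : E) :
    Module.finrank F (adjoin F (insert x s)) =
      Module.finrank F (adjoin F s) * Module.finrank (adjoin F s) (adjoin F s)⟮x⟯ := by
  rw [← restrictScalars_adjoin_simple_adjoin, Module.finrank_mul_finrank]
  rfl

variable {ι : Type*} {β : ι → E} {d : ι → F}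

theorem finrank_adjoin_image_le_two_pow (hβ : ∀ i, β i ^ 2 = algebraMap F E (d i))
    (S : Finset ι) : Module.finrank F (adjoin F (β '' S)) ≤ 2 ^ S.card := by
  classical
  induction S using Finset.induction_on with
  | empty =>
    rw [Finset.coe_empty, Set.image_empty, adjoin_empty]
    simp
  | insert i S hi ih =>
    rw [Finset.coe_insert, Set.image_insert_eq, finrank_adjoin_insert,
      Finset.card_insert_of_notMem hi, pow_succ]
    exact Nat.mul_le_mul ih
      (finrank_adjoin_simple_le_two (d := algebraMap F (adjoin F (β '' S)) (d i)) (hβ i))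

theorem exists_prod_mul_mem_bot (h2 : (2 : F) ≠ 0)
    (hβ : ∀ i, β i ^ 2 = algebraMap F E (d i)) {S : Finset ι} {y : E} {e : F}
    (hy : y ∈ adjoin F (β '' S)) (hy2 : y ^ 2 = algebraMap F E e) :
    ∃ T ⊆ S, (∏ i ∈ T, β i) * y ∈ (⊥ : IntermediateField F E) := by
  classical
  induction S using Finset.induction_on generalizing y e with
  | empty => exact ⟨∅, subset_rfl, by simpa using hy⟩
  | insert i S hi ih =>
    set M := adjoin F (β '' S)
    have hyM : y ∈ M⟮β i⟯ := by
      rwa [← mem_restrictScalars F, restrictScalars_adjoin_simple_adjoin, ← Set.image_insert_eq,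
        ← Finset.coe_insert]
    have h2M : (2 : M) ≠ 0 := by
      rw [← map_ofNat (algebraMap F M) 2]
      exact (_root_.map_ne_zero _).2 h2
    have hcases := mem_bot_or_mul_mem_bot_of_mem_adjoin_simple h2M
      (d := algebraMap F M (d i)) (e := algebraMap F M e) (hβ i) hyM hy2
    simp only [mem_bot_intermediateField_iff] at hcases
    rcases hcases with hyM | hyM
    · obtain ⟨T, hT, h⟩ := ih hyM hy2
      exact ⟨T, hT.trans (Finset.subset_insert i S), h⟩
    · obtain ⟨T, hT, h⟩ := ih hyM (e := d i * e) (by rw [mul_pow, hβ, hy2, map_mul])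
      refine ⟨insert i T, Finset.insert_subset_insert i hT, ?_⟩
      rwa [Finset.prod_insert fun hiT ↦ hi (hT hiT), mul_comm (β i), mul_assoc]

theorem finrank_adjoin_image_insert_eq_two_pow_iff [DecidableEq ι]
    (hβ : ∀ i, β i ^ 2 = algebraMap F E (d i)) {S : Finset ι} {i : ι} (hi : i ∉ S) :
    Module.finrank F (adjoin F (β '' (insert i S : Finset ι))) = 2 ^ (insert i S).card ↔
      Module.finrank F (adjoin F (β '' S)) = 2 ^ S.card ∧ β i ∉ adjoin F (β '' S) := by
  set M := adjoin F (β '' S) with hM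
  have hi2 : β i ^ 2 = algebraMap M E (algebraMap F M (d i)) := hβ i
  have hM_le : Module.finrank F M ≤ 2 ^ S.card := finrank_adjoin_image_le_two_pow hβ S
  have hpos : 0 < 2 ^ S.card := Nat.two_pow_pos _
  have hle : Module.finrank M M⟮β i⟯ ≤ 2 := finrank_adjoin_simple_le_two hi2
  rw [Finset.coe_insert, Set.image_insert_eq, finrank_adjoin_insert, ← hM,
    Finset.card_insert_of_notMem hi, pow_succ, ← mem_bot_intermediateField_iff,
    ← finrank_adjoin_simple_eq_two_iff hi2]
  refine ⟨fun h ↦ ?_, fun ⟨h, h'⟩ ↦ by rw [h, h']⟩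
  interval_cases Module.finrank M M⟮β i⟯ <;> omega

theorem finrank_adjoin_image_eq_two_pow_iff (h2 : (2 : F) ≠ 0)
    (hβ : ∀ i, β i ^ 2 = algebraMap F E (d i)) (S : Finset ι) :
    Module.finrank F (adjoin F (β '' S)) = 2 ^ S.card ↔
      ∀ T ⊆ S, T.Nonempty → ∏ i ∈ T, β i ∉ (⊥ : IntermediateField F E) := by
  classical
  induction S using Finset.induction_on with
  | empty => simp +contextual [adjoin_empty, Finset.subset_empty]
  | insert i S hi ih =>
    rw [finrank_adjoin_image_insert_eq_two_pow_iff hβ hi, ih]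
    constructor
    · rintro ⟨hS, hβi⟩ T hT hT_ne hprod
      by_cases hiT : i ∈ T
      · have hTS : T.erase i ⊆ S := Finset.subset_insert_iff.1 hT
        have hβ_ne : ∀ j ∈ T.erase i, β j ≠ 0 := fun j hj h0 ↦
          hS {j} (Finset.singleton_subset_iff.2 (hTS hj)) (Finset.singleton_nonempty j)
            (by simp [h0])
        have hmem : ∏ j ∈ T.erase i, β j ∈ adjoin F (β '' S) :=
          prod_mem fun j hj ↦ subset_adjoin F _ ⟨j, hTS hj, rfl⟩
        refine hβi ?_
        rw [← mul_div_cancel_right₀ (β i) (Finset.prod_ne_zero_iff.2 hβ_ne),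
          Finset.mul_prod_erase T β hiT]
        exact div_mem (bot_le (α := IntermediateField F E) hprod) hmem
      · exact hS T ((Finset.subset_insert_iff_of_notMem hiT).1 hT) hT_ne hprod
    · refine fun h ↦ ⟨fun T hT ↦ h T (hT.trans (Finset.subset_insert i S)), fun hβi ↦ ?_⟩
      obtain ⟨T, hT, hprod⟩ := exists_prod_mul_mem_bot h2 hβ hβi (hβ i)
      refine h (insert i T) (Finset.insert_subset_insert i hT) (Finset.insert_nonempty i T) ?_
      rwa [Finset.prod_insert fun hiT ↦ hi (hT hiT), mul_comm]

theorem finrank_adjoin_range_eq_two_pow_iff [Fintype ι] (h2 : (2 : F) ≠ 0)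
    (hβ : ∀ i, β i ^ 2 = algebraMap F E (d i)) :
    Module.finrank F (adjoin F (Set.range β)) = 2 ^ Fintype.card ι ↔
      ∀ T : Finset ι, T.Nonempty → ¬ IsSquare (∏ i ∈ T, d i) := by
  have hprod (T : Finset ι) : (∏ i ∈ T, β i) ^ 2 = algebraMap F E (∏ i ∈ T, d i) := by
    rw [← Finset.prod_pow, map_prod, Finset.prod_congr rfl fun i _ ↦ hβ i]
  rw [← Set.image_univ, ← Finset.coe_univ, ← Finset.card_univ,
    finrank_adjoin_image_eq_two_pow_iff h2 hβ]
  simp only [Finset.subset_univ, true_imp_iff, mem_bot_iff_isSquare_of_sq_eq (hprod _)]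

end Multiquadratic

section PGroup

open scoped Pointwise symmDiff

variable {G ι M : Type*} [Group G] [MulAction G ι]

theorem exists_nonempty_forall_smul_eq [Finite ι] [DecidableEq ι] (hG : IsPGroup 2 G)
    (V : SubMulAction G (Finset ι)) {T₀ : Finset ι} (hT₀ : T₀.Nonempty) (hempty : ∅ ∈ V)
    (hV : ∀ T ∈ V, T ∆ T₀ ∈ V) : ∃ T ∈ V, T.Nonempty ∧ ∀ σ : G, σ • T = T := by
  have := Fintype.ofFinite V
  have heven : 2 ∣ Nat.card V := by
    have : ∑ _T : V, (1 : ZMod 2) = 0 :=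
      Finset.sum_ninvolution (fun T ↦ ⟨T.1 ∆ T₀, hV T T.2⟩) (fun _ ↦ rfl)
        (fun T _ h ↦ hT₀.ne_empty (by simpa using congrArg Subtype.val h))
        (fun _ ↦ Finset.mem_univ _) (fun T ↦ Subtype.ext (symmDiff_symmDiff_cancel_right T₀ T.1))
    rw [Nat.card_eq_fintype_card, ← ZMod.natCast_eq_zero_iff]
    simpa using this
  obtain ⟨⟨T, hT⟩, hfix, hne⟩ := hG.exists_fixed_point_of_prime_dvd_card_of_fixed_point V heven
    (a := ⟨∅, hempty⟩) fun σ ↦ Subtype.ext (Finset.smul_finset_empty σ)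
  refine ⟨T, hT, Finset.nonempty_iff_ne_empty.2 fun h ↦ hne (Subtype.ext h.symm), fun σ ↦ ?_⟩
  exact congrArg Subtype.val (hfix σ)

theorem eq_univ_of_nonempty_of_forall_smul_eq [Fintype ι] [DecidableEq ι]
    [MulAction.IsPretransitive G ι] {T : Finset ι} (hT : T.Nonempty)
    (hfix : ∀ σ : G, σ • T = T) : T = Finset.univ := by
  obtain ⟨i, hi⟩ := hT
  refine Finset.eq_univ_of_forall fun j ↦ ?_
  obtain ⟨σ, rfl⟩ := MulAction.exists_smul_eq G i j
  exact hfix σ ▸ Finset.smul_mem_smul_finset hi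

theorem prod_symmDiff_mul_prod_inter_sq [CommMonoid M] [DecidableEq ι] (d : ι → M)
    (S T : Finset ι) :
    (∏ i ∈ S ∆ T, d i) * (∏ i ∈ S ∩ T, d i) ^ 2 = (∏ i ∈ S, d i) * ∏ i ∈ T, d i := by
  have hdisj : Disjoint (S ∆ T) (S ∩ T) := disjoint_symmDiff_inf S T
  have : S ∆ T ∪ S ∩ T = S ∪ T := symmDiff_sup_inf S T
  rw [sq, ← mul_assoc, ← Finset.prod_union hdisj, this, Finset.prod_union_inter]

theorem isSquare_prod_symmDiff [CommGroupWithZero M] [DecidableEq ι] {d : ι → M}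
    (hd : ∀ i, d i ≠ 0) {S T : Finset ι} (hS : IsSquare (∏ i ∈ S, d i))
    (hT : IsSquare (∏ i ∈ T, d i)) : IsSquare (∏ i ∈ S ∆ T, d i) := by
  have hinter : ∏ i ∈ S ∩ T, d i ≠ 0 := Finset.prod_ne_zero_iff.2 fun i _ ↦ hd i
  rw [← isSquare_sq_mul_iff hinter, mul_comm, prod_symmDiff_mul_prod_inter_sq]
  exact hS.mul hT

/-- The set `V` of subsets of `ι` over which the product of the family `d` is a square, as a
`G`-set. Subsets of `ι` stand for vectors of `𝔽₂^ι`, with `∆` as addition. -/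
def squareProducts [DecidableEq ι] [CommMonoid M] [MulDistribMulAction G M] (d : ι →[G] M) :
    SubMulAction G (Finset ι) where
  carrier := {T | IsSquare (∏ i ∈ T, d i)}
  smul_mem' σ T hT := by
    have hsmul : ∏ i ∈ σ • T, d i = σ • ∏ i ∈ T, d i := by
      simp only [Finset.smul_finset_def, Finset.prod_image (MulAction.injective σ).injOn, map_smul,
        Finset.smul_prod']
    rw [Set.mem_ofPred_eq, hsmul]
    exact hT.map (MulDistribMulAction.toMonoidHom M σ)

theorem mem_squareProducts [DecidableEq ι] [CommMonoid M] [MulDistribMulAction G M]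
    {d : ι →[G] M} {T : Finset ι} : T ∈ squareProducts d ↔ IsSquare (∏ i ∈ T, d i) :=
  .rfl

theorem isSquare_prod_univ_of_isSquare_prod [Fintype ι] [MulAction.IsPretransitive G ι]
    [CommGroupWithZero M] [MulDistribMulAction G M] (hG : IsPGroup 2 G)
    (d : ι →[G] M) (hd : ∀ i, d i ≠ 0) {T₀ : Finset ι} (hne : T₀.Nonempty)
    (hT₀ : IsSquare (∏ i ∈ T₀, d i)) : IsSquare (∏ i, d i) := by
  classical
  obtain ⟨T, hT, hT_ne, hfix⟩ := exists_nonempty_forall_smul_eq hG (squareProducts d) hne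
    (mem_squareProducts.2 (by simp)) fun T hT ↦ isSquare_prod_symmDiff hd hT hT₀
  exact eq_univ_of_nonempty_of_forall_smul_eq hT_ne hfix ▸ hT

end PGroup

theorem isSquare_prod_comp_of_isSquare_prod {G X ι M : Type*} [Group G] [MulAction G X]
    [CommGroupWithZero M] [MulDistribMulAction G M] [Fintype ι] (hG : IsPGroup 2 G) {α : ι → X}
    (hinj : Function.Injective α) (horbit : ∀ i, MulAction.orbit G (α i) = Set.range α)
    (f : X →[G] M) (hf : ∀ i, f (α i) ≠ 0) {T : Finset ι} (hne : T.Nonempty)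
    (hT : IsSquare (∏ i ∈ T, f (α i))) : IsSquare (∏ i, f (α i)) := by
  obtain ⟨i₀, -⟩ := id hne
  let e : ι ≃ MulAction.orbit G (α i₀) :=
    (Equiv.ofInjective α hinj).trans (Equiv.setCongr (horbit i₀).symm)
  let d : MulAction.orbit G (α i₀) →[G] M := f.comp ⟨Subtype.val, fun _ _ ↦ rfl⟩
  have : Fintype (MulAction.orbit G (α i₀)) := .ofEquiv ι e
  have hd : ∀ x, d x ≠ 0 := e.forall_congr_right.1 hf
  have hsquare : IsSquare (∏ x ∈ T.map e.toEmbedding, d x) := by rwa [Finset.prod_map]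
  have := isSquare_prod_univ_of_isSquare_prod hG d hd (hne.map (f := e.toEmbedding)) hsquare
  rwa [← e.prod_comp] at this

section Roots

variable {L ι : Type*} [Field L] [Fintype ι] {p : L[X]} {α : ι → L}

theorem eq_C_leadingCoeff_mul_prod_X_sub_C (hinj : Function.Injective α)
    (hroot : ∀ i, p.IsRoot (α i)) (hdeg : p.natDegree ≤ Fintype.card ι) :
    p = C p.leadingCoeff * ∏ i, (X - C (α i)) :=
  eq_leadingCoeff_mul_of_monic_of_dvd_of_natDegree_le (monic_prod_X_sub_C α Finset.univ)
    (Fintype.prod_dvd_of_coprime (pairwise_coprime_X_sub_C hinj)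
      fun i ↦ dvd_iff_isRoot.2 (hroot i))
    (by simpa using hdeg)

theorem eval_eq_leadingCoeff_mul_prod_sub (hinj : Function.Injective α)
    (hroot : ∀ i, p.IsRoot (α i)) (hdeg : p.natDegree ≤ Fintype.card ι) (x : L) :
    p.eval x = p.leadingCoeff * ∏ i, (x - α i) := by
  conv_lhs => rw [eq_C_leadingCoeff_mul_prod_X_sub_C hinj hroot hdeg]
  simp [eval_prod]

theorem isRoot_iff_mem_range (hp : p ≠ 0) (hinj : Function.Injective α)
    (hroot : ∀ i, p.IsRoot (α i)) (hdeg : p.natDegree ≤ Fintype.card ι) {x : L} :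
    p.IsRoot x ↔ x ∈ Set.range α := by
  rw [IsRoot, eval_eq_leadingCoeff_mul_prod_sub hinj hroot hdeg, mul_eq_zero,
    or_iff_right (leadingCoeff_ne_zero.2 hp), Finset.prod_eq_zero_iff]
  simp [sub_eq_zero, eq_comm]

theorem isSquare_prod_mul_sub_iff (hp : p ≠ 0) (hinj : Function.Injective α)
    (hroot : ∀ i, p.IsRoot (α i)) (hdeg : p.natDegree ≤ Fintype.card ι)
    (heven : Even (Fintype.card ι)) {a : L} (ha : a ≠ 0) (b : L) :
    IsSquare (∏ i, a * (α i - b)) ↔ IsSquare (p.leadingCoeff * p.eval b) := by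
  have hsign : ∏ i, (α i - b) = ∏ i, (b - α i) := by
    simp only [← neg_sub b, Finset.prod_neg, Finset.card_univ, heven.neg_one_pow, one_mul]
  obtain ⟨k, hk⟩ := heven
  rw [Finset.prod_mul_distrib, Finset.prod_const, Finset.card_univ, hsign, hk, ← mul_two, pow_mul,
    isSquare_sq_mul_iff (pow_ne_zero k ha), eval_eq_leadingCoeff_mul_prod_sub hinj hroot hdeg,
    ← mul_assoc, ← sq, isSquare_sq_mul_iff (leadingCoeff_ne_zero.2 hp)]

end Roots

section GaloisAction

variable {G K L ι : Type*} [Group G] [Field K] [Field L] [Algebra K L] [MulSemiringAction G L]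
  [SMulCommClass G K L]

theorem isRoot_map_smul {g : K[X]} {x : L} (hx : (g.map (algebraMap K L)).IsRoot x) (σ : G) :
    (g.map (algebraMap K L)).IsRoot (σ • x) := by
  rw [IsRoot, eval_map_algebraMap] at hx ⊢
  rw [aeval_smul, hx, smul_zero]

theorem ne_algebraMap_of_forall_exists_smul_eq [Nontrivial ι] {α : ι → L}
    (hinj : Function.Injective α) (htrans : ∀ i j, ∃ σ : G, σ • α i = α j) (i : ι) (b : K) :
    α i ≠ algebraMap K L b := by
  intro hi
  obtain ⟨j, hj⟩ := exists_ne i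
  obtain ⟨σ, hσ⟩ := htrans i j
  rw [hi, smul_algebraMap, ← hi] at hσ
  exact hj (hinj hσ.symm)

theorem orbit_eq_range_of_isRoot [Fintype ι] {g : K[X]} (hg : g ≠ 0) {α : ι → L}
    (hinj : Function.Injective α) (hroot : ∀ i, (g.map (algebraMap K L)).IsRoot (α i))
    (hdeg : g.natDegree ≤ Fintype.card ι) (htrans : ∀ i j, ∃ σ : G, σ • α i = α j) (i : ι) :
    MulAction.orbit G (α i) = Set.range α := by
  refine Set.Subset.antisymm ?_ (Set.range_subset_iff.2 (htrans i))
  rintro _ ⟨σ, rfl⟩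
  exact (isRoot_iff_mem_range (Polynomial.map_ne_zero hg) hinj hroot
    (by rwa [natDegree_map])).1 (isRoot_map_smul (hroot i) σ)

/-- The map `x ↦ a(x - b)` with coefficients in `K`, through which `G` permutes the radicands. -/
def radicandHom (G : Type*) [Group G] [MulSemiringAction G L] [SMulCommClass G K L] (a b : K) :
    L →[G] L where
  toFun x := algebraMap K L a * (x - algebraMap K L b)
  map_smul' σ x := by simp only [id, smul_mul', smul_sub, smul_algebraMap]

theorem radicandHom_apply (a b : K) (x : L) :
    radicandHom G a b x = algebraMap K L a * (x - algebraMap K L b) :=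
  rfl

end GaloisAction

theorem stmt19_general {G K L E ι : Type*} [Group G] [Field K] [Field L] [Field E] [Algebra K L]
    [Algebra L E] [MulSemiringAction G L] [SMulCommClass G K L] [Fintype ι] [Nonempty ι]
    (h2 : (2 : K) ≠ 0) (hG : IsPGroup 2 G) (heven : Even (Fintype.card ι))
    (g : K[X]) (hdeg : g.natDegree = Fintype.card ι)
    (α : ι → L) (hinj : Function.Injective α) (hroot : ∀ i, aeval (α i) g = 0)
    (htrans : ∀ i j, ∃ σ : G, σ • α i = α j) (a b : K) (ha : a ≠ 0) (β : ι → E)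
    (hβ : ∀ i, β i ^ 2 = algebraMap L E (algebraMap K L a * (α i - algebraMap K L b))) :
    Module.finrank L (IntermediateField.adjoin L (Set.range β)) = 2 ^ Fintype.card ι ↔
      ¬ IsSquare (algebraMap K L (g.leadingCoeff * g.eval b)) := by
  have h2L : (2 : L) ≠ 0 := by
    rw [← map_ofNat (algebraMap K L) 2]
    exact (_root_.map_ne_zero _).2 h2
  have haL : algebraMap K L a ≠ 0 := (_root_.map_ne_zero _).2 ha
  have hg : g ≠ 0 := by
    rintro rfl
    exact Fintype.card_ne_zero hdeg.symm
  have : Nontrivial ι :=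
    Fintype.one_lt_card_iff_nontrivial.1 (Nat.le_of_dvd Fintype.card_pos heven.two_dvd)
  have hrootL (i : ι) : (g.map (algebraMap K L)).IsRoot (α i) := by
    rw [IsRoot, eval_map_algebraMap, hroot]
  have hradicand (i : ι) : radicandHom G a b (α i) ≠ 0 :=
    mul_ne_zero haL (sub_ne_zero.2 (ne_algebraMap_of_forall_exists_smul_eq hinj htrans i b))
  have hnorm : IsSquare (∏ i, radicandHom G a b (α i)) ↔
      IsSquare (algebraMap K L (g.leadingCoeff * g.eval b)) := by
    simp only [radicandHom_apply]
    rw [isSquare_prod_mul_sub_iff (Polynomial.map_ne_zero hg) hinj hrootL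
      (by rw [natDegree_map, hdeg]) heven haL, leadingCoeff_map, eval_map_apply, map_mul]
  rw [finrank_adjoin_range_eq_two_pow_iff h2L hβ, ← hnorm]
  refine ⟨fun h ↦ h _ Finset.univ_nonempty, fun h T hT hT' ↦ h ?_⟩
  exact isSquare_prod_comp_of_isSquare_prod hG hinj
    (orbit_eq_range_of_isRoot hg hinj hrootL hdeg.le htrans) _ hradicand hT hT'

/-- Kummer-theoretic maximality criterion: let `g ∈ K[X]` be irreducible of even degree
`D = 2^{n−1}` (`n ≥ 2`) with splitting field `L`, whose Galois group is a 2-group acting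
transitively on the roots `α_1, …, α_D`, and let `θ(x) = a(x−c)² + b` with `a ≠ 0`.
Then `[L(√(a(α_1−b)), …, √(a(α_D−b))) : L] = 2^D` iff `ℓ_g · g(b)` is not a square
in `L` (note `g(b) = (g∘θ)(c)`). -/
theorem stmt19 {K L : Type*} [Field K] [CharZero K] [Field L] [Algebra K L]
    (g : K[X]) (hg : Irreducible g) (n : ℕ) (hn : 2 ≤ n)
    (hD : g.natDegree = 2 ^ (n - 1))
    [Polynomial.IsSplittingField K L g]
    (h2grp : IsPGroup 2 (L ≃ₐ[K] L))
    (α : Fin (2 ^ (n - 1)) → L) (hinj : Function.Injective α)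
    (hroot : ∀ i, Polynomial.aeval (α i) g = 0)
    (htrans : ∀ i j, ∃ σ : L ≃ₐ[K] L, σ (α i) = α j)
    (a b c : K) (ha : a ≠ 0)
    (β : Fin (2 ^ (n - 1)) → AlgebraicClosure L)
    (hβ : ∀ i, β i ^ 2 =
      algebraMap L (AlgebraicClosure L) (algebraMap K L a * (α i - algebraMap K L b))) :
    Module.finrank L (IntermediateField.adjoin L (Set.range β)) = 2 ^ (2 ^ (n - 1)) ↔
      ¬ IsSquare (algebraMap K L (g.leadingCoeff * g.eval b)) := by
  simpa only [Fintype.card_fin] using stmt19_general two_ne_zero h2grp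
    ((Fintype.card_fin _).symm ▸ even_two.pow_of_ne_zero (Nat.sub_ne_zero_of_lt hn)) g
    (by rw [hD, Fintype.card_fin]) α hinj hroot htrans a b ha β hβ
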